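/- Let Q(ξ) = (ξ_1 ξ_2, ξ_1² − ξ_2²) be a pair of real quadratic forms on ℝ². Then for all exponents p, q ∈ [1,∞] with q > 4 and 1/p + 3/q < 1, there exists a constant C = C(p,q) such that ‖E^Q f‖_{L^q(ℝ^4)} ≤ C ‖f‖_{L^p([0,1]²)} for every measurable function f : [0,1]² → ℂ. -/

import Mathlib

open MeasureTheory
open scoped ENNReal

/-- The extension operator associated to the quadratic surface
`S_Q = {(ξ, Q ξ) : ξ ∈ [0,1]^d} ⊆ ℝ^{d+n}`. -/
noncomputable def extOp (d n : ℕ) (Q : (Fin d → ℝ) → Fin n → ℝ)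
    (f : (Fin d → ℝ) → ℂ) (x : Fin (d + n) → ℝ) : ℂ :=
  ∫ ξ in Set.Icc (0 : Fin d → ℝ) 1,
    Complex.exp (2 * (Real.pi : ℂ) * Complex.I *
      ((((∑ i : Fin d, x (Fin.castAdd n i) * ξ i) +
        ∑ j : Fin n, x (Fin.natAdd d j) * Q ξ j : ℝ)) : ℂ)) * f ξ


open scoped FourierTransform SchwartzMap ContDiff in
lemma plancherel_aux {V : Type*} [NormedAddCommGroup V] [InnerProductSpace ℝ V]
    [FiniteDimensional ℝ V] [MeasurableSpace V] [BorelSpace V] (g : V → ℂ)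
    (h1 : Integrable g) (h2 : MemLp g 2) :
    eLpNorm (𝓕⁻ g) 2 volume = eLpNorm g 2 volume := by
  set G : Lp (α := V) ℂ 2 volume := h2.toLp g with hG
  have hcont : Continuous (𝓕⁻ g) := by
    have : (𝓕⁻ g) = VectorFourier.fourierIntegral Real.fourierChar volume (-innerₗ V) g := rfl
    rw [this]
    refine VectorFourier.fourierIntegral_continuous Real.continuous_fourierChar ?_ h1
    simp only [LinearMap.neg_apply, innerₗ_apply_apply]
    fun_prop
  have key : ∀ᵐ x, 𝓕⁻ g x = (𝓕⁻ G : Lp (α := V) ℂ 2 volume) x := by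
    apply ae_eq_of_integral_contDiff_smul_eq
    · exact hcont.locallyIntegrable
    · exact (Lp.memLp _).locallyIntegrable (by norm_num)
    · intro φ hφ hc
      have hg₁ : HasCompactSupport (Complex.ofRealCLM ∘ φ) := hc.comp_left rfl
      have hg₂ : ContDiff ℝ ∞ (Complex.ofRealCLM ∘ φ) := by fun_prop
      set ψ : 𝓢(V, ℂ) := hg₁.toSchwartzMap hg₂ with hψ
      have e1 : ∫ x, φ x • (𝓕⁻ G : Lp (α := V) ℂ 2 volume) x
          = ((𝓕⁻ G : Lp (α := V) ℂ 2 volume) : 𝓢'(V, ℂ)) ψ := by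
        simp [hψ]
      rw [e1, ← Lp.fourierInv_toTemperedDistribution_eq, TemperedDistribution.fourierInv_apply,
        Lp.toTemperedDistribution_apply]
      have e2 : ∫ x, (𝓕⁻ ψ) x • G x = ∫ x, (𝓕⁻ ψ) x • g x := by
        apply integral_congr_ae
        filter_upwards [h2.coeFn_toLp] with x hx
        rw [hG, hx]
      rw [e2, SchwartzMap.fourierInv_coe]
      have := VectorFourier.integral_fourierIntegral_smul_eq_flip (L := -innerₗ V) (μ := volume)
        (ν := volume) (e := Real.fourierChar) (f := ψ) (g := g) Real.continuous_fourierChar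
        (by simp only [LinearMap.neg_apply, innerₗ_apply_apply]; fun_prop) ψ.integrable h1
      have hf : (-innerₗ V).flip = -innerₗ V := by
        ext x y; simp [real_inner_comm]
      rw [hf] at this
      refine Eq.trans ?_ this.symm
      apply integral_congr_ae
      filter_upwards with x
      simp [hψ]
      left; rfl
  rw [eLpNorm_congr_ae key]
  have e3 : ‖(𝓕⁻ G : Lp (α := V) ℂ 2 volume)‖ = ‖G‖ := (Lp.fourierTransformₗᵢ V ℂ).symm.norm_map G
  have e4 : eLpNorm (𝓕⁻ G : Lp (α := V) ℂ 2 volume) 2 volume = eLpNorm G 2 volume := by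
    rw [← Lp.enorm_def, ← Lp.enorm_def, ← ofReal_norm, ← ofReal_norm, e3]
  rw [e4]
  exact eLpNorm_congr_ae h2.coeFn_toLp

/-- The (inverse) Fourier transform in coordinates. -/
noncomputable def FT (g : (Fin 4 → ℝ) → ℂ) (x : Fin 4 → ℝ) : ℂ :=
  ∫ y, Complex.exp (2 * (Real.pi : ℂ) * Complex.I * ((∑ i, x i * y i : ℝ) : ℂ)) * g y

open scoped FourierTransform in
lemma FT_eq (g : (Fin 4 → ℝ) → ℂ) (x : Fin 4 → ℝ) :
    FT g x = 𝓕⁻ (fun y : EuclideanSpace ℝ (Fin 4) => g (y.ofLp)) (WithLp.toLp 2 x) := by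
  rw [Real.fourierInv_eq', FT,
    ← (PiLp.volume_preserving_ofLp (Fin 4)).integral_comp
      (MeasurableEquiv.toLp 2 (Fin 4 → ℝ)).symm.measurableEmbedding]
  congr 1
  ext y
  simp only [smul_eq_mul, PiLp.inner_apply]
  congr 2
  push_cast
  simp
  ring

lemma FT_continuous (g : (Fin 4 → ℝ) → ℂ) (h1 : Integrable g) : Continuous (FT g) := by
  unfold FT
  refine continuous_of_dominated (bound := fun y => ‖g y‖) ?_ ?_ h1.norm ?_
  · intro x
    refine AEStronglyMeasurable.mul ?_ h1.aestronglyMeasurable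
    exact (by fun_prop : Continuous _).aestronglyMeasurable
  · intro x
    filter_upwards with y
    rw [norm_mul]
    have : ‖Complex.exp (2 * (Real.pi : ℂ) * Complex.I * ((∑ i, x i * y i : ℝ) : ℂ))‖ = 1 := by
      rw [show (2 * (Real.pi : ℂ) * Complex.I * ((∑ i, x i * y i : ℝ) : ℂ))
        = ((2 * Real.pi * ∑ i, x i * y i : ℝ) : ℂ) * Complex.I by push_cast; ring]
      exact Complex.norm_exp_ofReal_mul_I _
    rw [this, one_mul]
  · filter_upwards with y
    fun_prop

lemma FT_le (g : (Fin 4 → ℝ) → ℂ) (x) : ‖FT g x‖ₑ ≤ ∫⁻ y, ‖g y‖ₑ := by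
  unfold FT
  refine (enorm_integral_le_lintegral_enorm _).trans (le_of_eq ?_)
  congr 1
  ext y
  rw [enorm_mul]
  have : ‖Complex.exp (2 * (Real.pi : ℂ) * Complex.I * ((∑ i, x i * y i : ℝ) : ℂ))‖ₑ = 1 := by
    rw [show (2 * (Real.pi : ℂ) * Complex.I * ((∑ i, x i * y i : ℝ) : ℂ))
        = ((2 * Real.pi * ∑ i, x i * y i : ℝ) : ℂ) * Complex.I by push_cast; ring]
    rw [← ofReal_norm, Complex.norm_exp_ofReal_mul_I]; simp
  rw [this, one_mul]

lemma FT_plancherel (g : (Fin 4 → ℝ) → ℂ) (h1 : Integrable g) (h2 : MemLp g 2) :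
    eLpNorm (FT g) 2 volume = eLpNorm g 2 volume := by
  have hp := PiLp.volume_preserving_ofLp (Fin 4)
  have hp' := PiLp.volume_preserving_toLp (Fin 4)
  have h1' : Integrable (fun y : EuclideanSpace ℝ (Fin 4) => g (y.ofLp)) :=
    hp.integrable_comp_of_integrable h1
  have h2' : MemLp (fun y : EuclideanSpace ℝ (Fin 4) => g (y.ofLp)) 2 :=
    h2.comp_measurePreserving hp
  have := plancherel_aux _ h1' h2'
  have e1 : eLpNorm (fun y : EuclideanSpace ℝ (Fin 4) => g (y.ofLp)) 2 volume
      = eLpNorm g 2 volume :=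
    eLpNorm_comp_measurePreserving h2.aestronglyMeasurable hp
  have e2 : eLpNorm (fun y : EuclideanSpace ℝ (Fin 4) => FT g (y.ofLp)) 2 volume
      = eLpNorm (FT g) 2 volume :=
    eLpNorm_comp_measurePreserving (FT_continuous g h1).aestronglyMeasurable hp
  rw [← e1, ← this, ← e2]
  congr 1
  ext y
  rw [FT_eq]

lemma FT_add (g h : (Fin 4 → ℝ) → ℂ) (hg : Integrable g) (hh : Integrable h) (x) :
    FT (g + h) x = FT g x + FT h x := by
  have key : ∀ g : (Fin 4 → ℝ) → ℂ, Integrable g → Integrable (fun y =>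
      Complex.exp (2 * (Real.pi : ℂ) * Complex.I * ((∑ i, x i * y i : ℝ) : ℂ)) * g y) := by
    intro g hg
    refine hg.bdd_mul (c := 1) (by fun_prop : Continuous _).aestronglyMeasurable ?_
    filter_upwards with y
    rw [show (2 * (Real.pi : ℂ) * Complex.I * ((∑ i, x i * y i : ℝ) : ℂ))
        = ((2 * Real.pi * ∑ i, x i * y i : ℝ) : ℂ) * Complex.I by push_cast; ring]
    exact (Complex.norm_exp_ofReal_mul_I _).le
  unfold FT
  rw [← integral_add (key g hg) (key h hh)]
  simp only [Pi.add_apply, mul_add]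

lemma lint_rpow (a T : ℝ) (ha : -1 < a) (hT : 0 ≤ T) :
    ∫⁻ t in Set.Ioc 0 T, ENNReal.ofReal (t ^ a) = ENNReal.ofReal (T ^ (a + 1) / (a + 1)) := by
  rw [← ofReal_integral_eq_lintegral_ofReal]
  · rw [← intervalIntegral.integral_of_le hT, integral_rpow (Or.inl ha)]
    rw [Real.zero_rpow (by linarith), sub_zero]
  · have := intervalIntegral.intervalIntegrable_rpow' (a := 0) (b := T) ha
    rwa [intervalIntegrable_iff_integrableOn_Ioc_of_le hT] at this
  · filter_upwards [ae_restrict_mem measurableSet_Ioc] with t ht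
    exact Real.rpow_nonneg ht.1.le _

lemma HY_tail (Q : ℝ) (hQ : 2 < Q) (g : (Fin 4 → ℝ) → ℂ) (hg : Measurable g) (n : ℝ) (hn : 0 < n)
    (hN : ∫⁻ y, ‖g y‖ₑ ^ (Q / (Q - 1)) = ENNReal.ofReal n) (t : ℝ) (ht : 0 < t) :
    ∫⁻ y, ‖({y | ‖g y‖ ≤ (2 * n / t) ^ (Q - 1)}ᶜ).indicator g y‖ₑ ≤ ENNReal.ofReal (t / 2) := by
  set r := Q / (Q - 1) with hr
  set s := (2 * n / t) ^ (Q - 1) with hs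
  have hQ1 : 0 < Q - 1 := by linarith
  have hs0 : 0 < s := by positivity
  have hr1 : 1 - r = - (1 / (Q - 1)) := by rw [hr]; field_simp; ring
  have hs1 : s ^ (1 - r) = t / (2 * n) := by
    rw [hs, ← Real.rpow_mul (by positivity), hr1]
    rw [show (Q - 1) * -(1 / (Q - 1)) = -1 by field_simp]
    rw [Real.rpow_neg_one]; field_simp
  calc _ ≤ ∫⁻ y, ENNReal.ofReal (t / (2 * n)) * ‖g y‖ₑ ^ r := by
        apply lintegral_mono
        intro y
        by_cases hy : ‖g y‖ ≤ s
        · simp [Set.indicator, hy]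
        · have : y ∈ {y | ‖g y‖ ≤ s}ᶜ := hy
          simp only [Set.indicator_of_mem this]
          push Not at hy
          have h0 : 0 < ‖g y‖ := hs0.trans hy
          rw [← ofReal_norm, ENNReal.ofReal_rpow_of_pos h0, ← ENNReal.ofReal_mul (by positivity)]
          apply ENNReal.ofReal_le_ofReal
          rw [← hs1]
          calc ‖g y‖ = ‖g y‖ ^ (1 - r) * ‖g y‖ ^ r := by
                rw [← Real.rpow_add h0]; simp
            _ ≤ _ := by
                refine mul_le_mul_of_nonneg_right ?_ (by positivity)
                apply Real.rpow_le_rpow_of_nonpos hs0 hy.le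
                rw [hr1]; simp; linarith
    _ = ENNReal.ofReal (t / (2 * n)) * ENNReal.ofReal n := by
        rw [lintegral_const_mul _ (by fun_prop), hN]
    _ = ENNReal.ofReal (t / 2) := by
        rw [← ENNReal.ofReal_mul (by positivity)]
        congr 1; field_simp

lemma HY_level (Q : ℝ) (hQ : 2 < Q) (g : (Fin 4 → ℝ) → ℂ) (hg : Measurable g) (hi : Integrable g)
    (n : ℝ) (hn : 0 < n)
    (hN : ∫⁻ y, ‖g y‖ₑ ^ (Q / (Q - 1)) = ENNReal.ofReal n) (t : ℝ) (ht : 0 < t) :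
    volume {x | t < ‖FT g x‖} ≤ ENNReal.ofReal (4 / t ^ 2) *
      ∫⁻ y, ({y | ‖g y‖ ≤ (2 * n / t) ^ (Q - 1)}).indicator (fun y => ‖g y‖ₑ ^ 2) y := by
  have htail := HY_tail Q hQ g hg n hn hN t ht
  set s := (2 * n / t) ^ (Q - 1) with hs
  have hs0 : 0 < s := by positivity
  set A := {y | ‖g y‖ ≤ s} with hA
  have hAm : MeasurableSet A := measurableSet_le hg.norm measurable_const
  have i1 : Integrable (A.indicator g) := hi.indicator hAm
  have i2 : Integrable (Aᶜ.indicator g) := hi.indicator hAm.compl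
  have hbd : ∀ y, ‖A.indicator g y‖ ≤ s := by
    intro y
    by_cases hy : y ∈ A
    · rw [Set.indicator_of_mem hy]; exact hy
    · rw [Set.indicator_of_notMem hy]; simpa using hs0.le
  have m2 : MemLp (A.indicator g) 2 := by
    rw [memLp_two_iff_integrable_sq_norm i1.aestronglyMeasurable]
    simp only [pow_two]
    exact i1.norm.bdd_mul (c := s) i1.norm.aestronglyMeasurable
      (Filter.Eventually.of_forall fun y => by simpa using hbd y)
  have hpl := FT_plancherel _ i1 m2
  have hpl2 : ∫⁻ x, ‖FT (A.indicator g) x‖ₑ ^ 2 = ∫⁻ y, ‖A.indicator g y‖ₑ ^ 2 := by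
    have h := congrArg (fun z => z ^ (2:ℝ)) hpl
    simp only [eLpNorm_eq_lintegral_rpow_enorm_toReal (two_ne_zero) (ENNReal.ofNat_ne_top),
      ← ENNReal.rpow_mul] at h
    simpa using h
  have hsub : {x | t < ‖FT g x‖} ⊆ {x | ENNReal.ofReal ((t / 2) ^ 2) ≤ ‖FT (A.indicator g) x‖ₑ ^ 2} := by
    intro x hx
    have hx : t < ‖FT g x‖ := hx
    have e : FT g x = FT (A.indicator g) x + FT (Aᶜ.indicator g) x := by
      rw [← FT_add _ _ i1 i2, Set.indicator_self_add_compl]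
    have h3 : ‖FT (Aᶜ.indicator g) x‖ ≤ t / 2 := by
      have := (FT_le (Aᶜ.indicator g) x).trans htail
      rwa [← ofReal_norm, ENNReal.ofReal_le_ofReal_iff (by positivity)] at this
    have h4 : t / 2 ≤ ‖FT (A.indicator g) x‖ := by
      have := norm_add_le (FT (A.indicator g) x) (FT (Aᶜ.indicator g) x)
      rw [← e] at this
      linarith
    change ENNReal.ofReal ((t / 2) ^ 2) ≤ _
    rw [← ofReal_norm, ← ENNReal.ofReal_pow (norm_nonneg _)]
    apply ENNReal.ofReal_le_ofReal
    gcongr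
  have hmk := mul_meas_ge_le_lintegral₀ (μ := (volume : Measure (Fin 4 → ℝ)))
    (f := fun x => ‖FT (A.indicator g) x‖ₑ ^ 2)
    (by have := (FT_continuous _ i1).measurable; fun_prop) (ENNReal.ofReal ((t / 2) ^ 2))
  calc volume {x | t < ‖FT g x‖} ≤ volume {x | ENNReal.ofReal ((t / 2) ^ 2) ≤ ‖FT (A.indicator g) x‖ₑ ^ 2} :=
        measure_mono hsub
    _ = ENNReal.ofReal (4 / t ^ 2) * (ENNReal.ofReal ((t / 2) ^ 2) *
      volume {x | ENNReal.ofReal ((t / 2) ^ 2) ≤ ‖FT (A.indicator g) x‖ₑ ^ 2}) := by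
        rw [← mul_assoc, ← ENNReal.ofReal_mul (by positivity)]
        rw [show 4 / t ^ 2 * (t / 2) ^ 2 = 1 by field_simp; norm_num]
        simp
    _ ≤ _ := by
        gcongr
        refine hmk.trans (le_of_eq ?_)
        rw [hpl2]
        congr 1; ext y
        by_cases hy : y ∈ A <;> simp [hy]

lemma HY (Q : ℝ) (hQ : 2 < Q) : ∃ C : ℝ≥0∞, C < ⊤ ∧ C ≠ 0 ∧ ∀ g : (Fin 4 → ℝ) → ℂ,
    Measurable g → Integrable g →
    ∫⁻ x, ‖FT g x‖ₑ ^ Q ≤ C * (∫⁻ y, ‖g y‖ₑ ^ (Q / (Q - 1))) ^ (Q - 1) := by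
  have hQ1 : 0 < Q - 1 := by linarith
  have hQ2 : 0 < Q - 2 := by linarith
  refine ⟨ENNReal.ofReal (Q * (4 * 2 ^ (Q - 2) / (Q - 2))), ENNReal.ofReal_lt_top, ?_, ?_⟩
  · have : 0 < Q * (4 * 2 ^ (Q - 2) / (Q - 2)) := by positivity
    simpa using this
  have hC : 0 < Q * (4 * 2 ^ (Q - 2) / (Q - 2)) := by positivity
  intro g hg hi
  set r := Q / (Q - 1) with hr
  have hr0 : 0 < r := by positivity
  rcases eq_or_ne (∫⁻ y, ‖g y‖ₑ ^ r) ⊤ with hT | hT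
  · rw [hT, ENNReal.top_rpow_of_pos hQ1, ENNReal.mul_top (by simpa using hC)]
    exact le_top
  rcases eq_or_ne (∫⁻ y, ‖g y‖ₑ ^ r) 0 with h0 | h0
  · rw [lintegral_eq_zero_iff (by fun_prop)] at h0
    have : ∫⁻ y, ‖g y‖ₑ = 0 := by
      rw [lintegral_eq_zero_iff (by fun_prop)]
      filter_upwards [h0] with y hy
      simpa [hr0, hr0.not_gt] using hy
    have h2 : ∀ x, ‖FT g x‖ₑ = 0 := fun x => le_antisymm ((FT_le g x).trans this.le) bot_le
    simp [h2, show 0 < Q by linarith]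
  set n := (∫⁻ y, ‖g y‖ₑ ^ r).toReal with hn'
  have hn : 0 < n := ENNReal.toReal_pos h0 hT
  have hN : ∫⁻ y, ‖g y‖ₑ ^ r = ENNReal.ofReal n := (ENNReal.ofReal_toReal hT).symm
  have hlev := HY_level Q hQ g hg hi n hn hN
  have e0 : ∫⁻ x, ‖FT g x‖ₑ ^ Q = ∫⁻ x, ENNReal.ofReal (‖FT g x‖ ^ Q) := by
    congr 1; ext x
    rw [← ofReal_norm, ENNReal.ofReal_rpow_of_nonneg (norm_nonneg _) (by linarith)]
  rw [e0, lintegral_rpow_eq_lintegral_meas_lt_mul _ (Filter.Eventually.of_forall fun x => norm_nonneg _)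
    (FT_continuous g hi).norm.measurable.aemeasurable (by linarith : 0 < Q)]
  rw [hN, ENNReal.ofReal_rpow_of_pos hn, ENNReal.ofReal_mul (by linarith), mul_assoc]
  gcongr
  calc ∫⁻ t in Set.Ioi (0:ℝ), volume {x | t < ‖FT g x‖} * ENNReal.ofReal (t ^ (Q - 1))
      ≤ ∫⁻ t in Set.Ioi (0:ℝ), ∫⁻ y, (if ‖g y‖ ≤ (2 * n / t) ^ (Q - 1) then
          ENNReal.ofReal (4 * t ^ (Q - 3)) * ‖g y‖ₑ ^ 2 else 0) := by
        apply setLIntegral_mono' measurableSet_Ioi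
        intro t ht
        have ht : 0 < t := ht
        refine (mul_le_mul_left (hlev t ht) _).trans (le_of_eq ?_)
        rw [mul_comm, ← mul_assoc, ← ENNReal.ofReal_mul (by positivity), ← lintegral_const_mul]
        · congr 1; ext y
          have : t ^ (Q - 1) * (4 / t ^ 2) = 4 * t ^ (Q - 3) := by
            rw [show Q - 1 = (Q - 3) + 2 by ring, Real.rpow_add ht, Real.rpow_ofNat]
            field_simp
          rw [this]
          by_cases hy : ‖g y‖ ≤ (2 * n / t) ^ (Q - 1) <;> simp [Set.indicator, hy]
        · exact Measurable.indicator (by fun_prop) (measurableSet_le hg.norm measurable_const)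
    _ = ∫⁻ y, ∫⁻ t in Set.Ioi (0:ℝ), (if ‖g y‖ ≤ (2 * n / t) ^ (Q - 1) then
          ENNReal.ofReal (4 * t ^ (Q - 3)) * ‖g y‖ₑ ^ 2 else 0) := by
        rw [lintegral_lintegral_swap]
        refine Measurable.aemeasurable ?_
        refine Measurable.ite (measurableSet_le ?_ ?_) ?_ measurable_const
        · fun_prop
        · fun_prop
        · fun_prop
    _ ≤ ∫⁻ y, ENNReal.ofReal (4 * (2 * n) ^ (Q - 2) / (Q - 2)) * ‖g y‖ₑ ^ r := by
        apply lintegral_mono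
        intro y
        dsimp only
        rcases eq_or_lt_of_le (norm_nonneg (g y)) with h0 | h0
        · have : g y = 0 := by simpa using h0.symm
          simp [this]
        set a := ‖g y‖ with ha
        set T := 2 * n * a ^ (-(r - 1)) with hTdef
        have hr1 : (r - 1) * (Q - 1) = 1 := by rw [hr]; field_simp; ring
        calc _ ≤ ∫⁻ t in Set.Ioi (0:ℝ), (Set.Ioc 0 T).indicator
              (fun t => ENNReal.ofReal (t ^ (Q - 3)) * (ENNReal.ofReal 4 * ‖g y‖ₑ ^ 2)) t := by
              apply setLIntegral_mono' measurableSet_Ioi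
              intro t ht
              have ht : 0 < t := ht
              split_ifs with h
              · have : t ≤ T := by
                  have h2 : a ^ (r - 1) ≤ 2 * n / t := by
                    have := Real.rpow_le_rpow h0.le h (by
                      have : 0 < (r - 1) * (Q - 1) := by rw [hr1]; norm_num
                      exact (pos_of_mul_pos_left this hQ1.le).le : 0 ≤ r - 1)
                    rwa [← Real.rpow_mul (by positivity), mul_comm (Q - 1), hr1, Real.rpow_one] at this
                  rw [hTdef, Real.rpow_neg h0.le, ← div_eq_mul_inv, le_div_iff₀ (by positivity)]
                  rw [le_div_iff₀ ht] at h2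
                  linarith
                rw [Set.indicator_of_mem (show t ∈ Set.Ioc 0 T from ⟨ht, this⟩)]
                rw [ENNReal.ofReal_mul (by norm_num)]
                apply le_of_eq; ring
              · exact bot_le
          _ = ENNReal.ofReal (T ^ (Q - 2) / (Q - 2)) * (ENNReal.ofReal 4 * ‖g y‖ₑ ^ 2) := by
              rw [setLIntegral_indicator measurableSet_Ioc,
                Set.inter_eq_self_of_subset_left (fun x hx => hx.1),
                lintegral_mul_const _ (by fun_prop), lint_rpow _ _ (by linarith) (by positivity)]
              ring_nf
          _ ≤ _ := by
              rw [← ofReal_norm, ← ha, ← ENNReal.ofReal_pow h0.le,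
                ENNReal.ofReal_rpow_of_pos h0, ← ENNReal.ofReal_mul (by norm_num),
                ← ENNReal.ofReal_mul (by positivity), ← ENNReal.ofReal_mul (by positivity)]
              apply le_of_eq
              congr 1
              rw [hTdef, Real.mul_rpow (by positivity) (by positivity), ← Real.rpow_mul h0.le]
              have : a ^ (-(r - 1) * (Q - 2)) * a ^ 2 = a ^ r := by
                rw [← Real.rpow_two, ← Real.rpow_add h0]
                congr 1
                linarith
              rw [← this]
              ring
    _ = ENNReal.ofReal (4 * (2 * n) ^ (Q - 2) / (Q - 2)) * ENNReal.ofReal n := by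
        rw [lintegral_const_mul _ (by fun_prop), hN]
    _ ≤ _ := by
        rw [← ENNReal.ofReal_mul (by positivity), ← ENNReal.ofReal_mul (by positivity)]
        apply le_of_eq
        congr 1
        rw [Real.mul_rpow (by norm_num) hn.le, show Q - 1 = (Q - 2) + 1 by ring,
          Real.rpow_add hn, Real.rpow_one]
        ring

/-- The map `(z, w) ↦ (z + w, Q z + Q w)` in coordinates. -/
def Phi (y : Fin 4 → ℝ) : Fin 4 → ℝ :=
  ![y 0 + y 2, y 1 + y 3, y 0 * y 1 + y 2 * y 3, (y 0 ^ 2 - y 1 ^ 2) + (y 2 ^ 2 - y 3 ^ 2)]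

/-- The Jacobian matrix of `Phi`. -/
def PhiMat (y : Fin 4 → ℝ) : Matrix (Fin 4) (Fin 4) ℝ :=
  !![1, 0, 1, 0; 0, 1, 0, 1; y 1, y 0, y 3, y 2; 2 * y 0, -2 * y 1, 2 * y 2, -2 * y 3]

/-- The absolute value of the Jacobian determinant. -/
def Jac (y : Fin 4 → ℝ) : ℝ := 2 * ((y 2 - y 0) ^ 2 + (y 3 - y 1) ^ 2)

/-- The half space where `Phi` is injective. -/
def HS : Set (Fin 4 → ℝ) := {y | y 0 < y 2}

lemma PhiMat_det (y : Fin 4 → ℝ) : |(PhiMat y).det| = Jac y := by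
  have : (PhiMat y).det = - Jac y := by
    unfold PhiMat Jac
    simp [Matrix.det_succ_row_zero, Fin.sum_univ_succ, Fin.succAbove]
    ring
  rw [this, abs_neg, abs_of_nonneg]
  unfold Jac; positivity

lemma Phi_deriv (y : Fin 4 → ℝ) :
    HasFDerivAt Phi (LinearMap.toContinuousLinearMap (Matrix.toLin' (PhiMat y))) y := by
  have hpr : ∀ i : Fin 4, HasFDerivAt (fun y : Fin 4 → ℝ => y i)
      (ContinuousLinearMap.proj (R := ℝ) (φ := fun _ : Fin 4 => ℝ) i) y :=
    fun i => hasFDerivAt_apply i y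
  rw [hasFDerivAt_pi']
  intro i
  fin_cases i
  · refine ((hpr 0).add (hpr 2)).congr_fderiv ?_
    ext v
    simp [PhiMat, dotProduct, Fin.sum_univ_succ]
  · refine ((hpr 1).add (hpr 3)).congr_fderiv ?_
    ext v
    simp [PhiMat, dotProduct, Fin.sum_univ_succ]
  · refine (((hpr 0).mul (hpr 1)).add ((hpr 2).mul (hpr 3))).congr_fderiv ?_
    ext v
    simp [PhiMat, dotProduct, Fin.sum_univ_succ]
    ring
  · refine ((((hpr 0).pow 2).sub ((hpr 1).pow 2)).add
      (((hpr 2).pow 2).sub ((hpr 3).pow 2))).congr_fderiv ?_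
    ext v
    simp [PhiMat, dotProduct, Fin.sum_univ_succ]
    ring

lemma Phi_inj : Set.InjOn Phi HS := by
  intro y hy y' hy' h
  have h0 := congrFun h 0
  have h1 := congrFun h 1
  have h2 := congrFun h 2
  have h3 := congrFun h 3
  simp [Phi] at h0 h1 h2 h3
  have hy : y 0 < y 2 := hy
  have hy' : y' 0 < y' 2 := hy'
  obtain ⟨a, ha⟩ : ∃ a, a = y 2 - y 0 := ⟨_, rfl⟩
  obtain ⟨b, hb⟩ : ∃ b, b = y 3 - y 1 := ⟨_, rfl⟩
  obtain ⟨a', ha'⟩ : ∃ a, a = y' 2 - y' 0 := ⟨_, rfl⟩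
  obtain ⟨b', hb'⟩ : ∃ b, b = y' 3 - y' 1 := ⟨_, rfl⟩
  have a0 : 0 < a := by linarith
  have a0' : 0 < a' := by linarith
  have e2 : y' 2 = y' 0 + a' := by linarith
  have e3 : y' 3 = y' 1 + b' := by linarith
  have e2' : y 2 = y 0 + a := by linarith
  have e3' : y 3 = y 1 + b := by linarith
  have e0 : y 0 = y' 0 + (a' - a) / 2 := by linarith
  have e1 : y 1 = y' 1 + (b' - b) / 2 := by linarith
  rw [e2, e3, e2', e3', e0, e1] at h2 h3
  have p1 : a * b = a' * b' := by linarith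
  have p2 : a ^ 2 - b ^ 2 = a' ^ 2 - b' ^ 2 := by linarith
  have p3 : (a ^ 2 + b ^ 2) ^ 2 = (a' ^ 2 + b' ^ 2) ^ 2 := by
    calc (a ^ 2 + b ^ 2) ^ 2 = (a ^ 2 - b ^ 2) ^ 2 + 4 * (a * b) ^ 2 := by ring
      _ = _ := by rw [p1, p2]; ring
  have p4 : a ^ 2 + b ^ 2 = a' ^ 2 + b' ^ 2 :=
    (pow_left_inj₀ (by positivity) (by positivity) two_ne_zero).1 p3
  have p5 : a = a' := (pow_left_inj₀ a0.le a0'.le two_ne_zero).1 (by linarith)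
  have p6 : b = b' := by
    rw [p5] at p1
    exact mul_left_cancel₀ a0'.ne' p1
  ext i
  fin_cases i <;> simp <;> linarith

lemma HS_meas : MeasurableSet HS :=
  measurableSet_lt (measurable_pi_apply 0) (measurable_pi_apply 2)

lemma Jac_pos {y : Fin 4 → ℝ} (hy : y ∈ HS) : 0 < Jac y := by
  have hy : y 0 < y 2 := hy
  have : 0 < (y 2 - y 0) ^ 2 := by
    have : 0 < y 2 - y 0 := by linarith
    positivity
  unfold Jac; positivity

lemma Phi_det (y : Fin 4 → ℝ) :
    |(LinearMap.toContinuousLinearMap (Matrix.toLin' (PhiMat y))).det| = Jac y := by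
  rw [← PhiMat_det, LinearMap.det_toContinuousLinearMap, LinearMap.det_toLin']

lemma cov_est (Q : ℝ) (hQ : 2 < Q) : ∃ C : ℝ≥0∞, C < ⊤ ∧ C ≠ 0 ∧ ∀ F : (Fin 4 → ℝ) → ℂ,
    Measurable F → Integrable F →
    ∫⁻ x : Fin 4 → ℝ, ‖∫ y in HS, Complex.exp (2 * (Real.pi : ℂ) * Complex.I *
        ((∑ i, x i * Phi y i : ℝ) : ℂ)) * F y‖ₑ ^ Q ≤
      C * (∫⁻ y in HS, ENNReal.ofReal (Jac y) ^ (1 - Q / (Q - 1)) *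
        ‖F y‖ₑ ^ (Q / (Q - 1))) ^ (Q - 1) := by
  obtain ⟨C, hC, hC0, h⟩ := HY Q hQ
  refine ⟨C, hC, hC0, fun F hF hFi => ?_⟩
  have hd : ∀ y ∈ HS, HasFDerivWithinAt Phi
    (LinearMap.toContinuousLinearMap (Matrix.toLin' (PhiMat y))) HS y :=
    fun y _ => (Phi_deriv y).hasFDerivWithinAt
  have hemb := measurableEmbedding_of_fderivWithin HS_meas hd Phi_inj
  have hJm : Measurable Jac := by unfold Jac; fun_prop
  set g : (Fin 4 → ℝ) → ℂ :=
    Function.extend (HS.domRestrict Phi) (fun y : HS => F y / (Jac y : ℂ)) 0 with hgdef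
  have hg : Measurable g := by
    refine hemb.measurable_extend ?_ measurable_const
    fun_prop
  have hgv : ∀ y ∈ HS, g (Phi y) = F y / (Jac y : ℂ) := by
    intro y hy
    exact hemb.injective.extend_apply (fun y : HS => F y / (Jac y : ℂ)) 0 ⟨y, hy⟩
  have hg0 : ∀ v, v ∉ Phi '' HS → g v = 0 := by
    intro v hv
    rw [hgdef, Function.extend_apply']
    · rfl
    · rintro ⟨a, ha⟩
      exact hv ⟨a.1, a.2, ha⟩
  have hl : ∀ r : ℝ, 0 < r → ∫⁻ v, ‖g v‖ₑ ^ r =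
      ∫⁻ y in HS, ENNReal.ofReal (Jac y) ^ (1 - r) * ‖F y‖ₑ ^ r := by
    intro r hr
    have h1 : ∫⁻ v, ‖g v‖ₑ ^ r = ∫⁻ v in Phi '' HS, ‖g v‖ₑ ^ r := by
      rw [setLIntegral_eq_of_support_subset]
      intro v hv
      by_contra hc
      apply hv
      simp [hg0 v hc, hr]
    rw [h1, lintegral_image_eq_lintegral_abs_det_fderiv_mul _ HS_meas hd Phi_inj]
    apply setLIntegral_congr_fun HS_meas
    intro y hy
    have hJ := Jac_pos hy
    dsimp only
    rw [Phi_det, hgv y hy, ← ofReal_norm, ← ofReal_norm, norm_div, Complex.norm_real,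
      Real.norm_of_nonneg hJ.le, ENNReal.ofReal_rpow_of_nonneg (by positivity) hr.le,
      ENNReal.ofReal_rpow_of_nonneg (by positivity) hr.le, ENNReal.ofReal_rpow_of_pos hJ,
      ← ENNReal.ofReal_mul hJ.le, ← ENNReal.ofReal_mul (by positivity)]
    congr 1
    rw [Real.div_rpow (by positivity) hJ.le, Real.rpow_sub hJ, Real.rpow_one]
    ring
  have hgi : Integrable g := by
    refine ⟨hg.aestronglyMeasurable, ?_⟩
    have := hl 1 one_pos
    simp at this
    rw [hasFiniteIntegral_iff_enorm, this]
    exact lt_of_le_of_lt (setLIntegral_le_lintegral _ _) hFi.hasFiniteIntegral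
  have hFT : ∀ x, FT g x = ∫ y in HS, Complex.exp (2 * (Real.pi : ℂ) * Complex.I *
        ((∑ i, x i * Phi y i : ℝ) : ℂ)) * F y := by
    intro x
    unfold FT
    rw [← setIntegral_eq_integral_of_forall_compl_eq_zero (s := Phi '' HS)
      (fun v hv => by rw [hg0 v hv, mul_zero]),
      integral_image_eq_integral_abs_det_fderiv_smul _ HS_meas hd Phi_inj]
    apply setIntegral_congr_fun HS_meas
    intro y hy
    have hJ := Jac_pos hy
    dsimp only
    rw [Phi_det, hgv y hy, Complex.real_smul]
    have : (Jac y : ℂ) ≠ 0 := by exact_mod_cast hJ.ne'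
    field_simp
  have := h g hg hgi
  rw [hl _ (by have : 0 < Q - 1 := by linarith
               positivity)] at this
  simpa only [hFT] using this

lemma young_aux {X : Type*} [MeasurableSpace X] (μ : Measure X) [SFinite μ] (u : X → ℝ≥0∞)
    (hu : Measurable u) (k : X × X → ℝ≥0∞) (hk : Measurable k) (K : ℝ≥0∞) (θ σ : ℝ)
    (hθ : 0 < θ) (hθ1 : θ < 1) (hσ : σ * (1 - θ / 2) = 1)
    (h1 : ∀ᵐ z ∂μ, ∫⁻ w, k (z, w) ^ (1 / θ) ∂μ ≤ K)
    (h2 : ∀ᵐ w ∂μ, ∫⁻ z, k (z, w) ^ (1 / θ) ∂μ ≤ K) :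
    ∫⁻ p, u p.1 * u p.2 * k p ∂(μ.prod μ) ≤ K ^ θ * (∫⁻ z, u z ^ σ ∂μ) ^ (2 - θ) := by
  have hσ0 : 0 < σ := by
    have : 0 < σ * (1 - θ / 2) := by rw [hσ]; norm_num
    exact pos_of_mul_pos_left this (by linarith)
  set M := ∫⁻ z, u z ^ σ ∂μ with hM
  set f : Fin 3 → X × X → ℝ≥0∞ := ![fun p => u p.1 ^ σ * u p.2 ^ σ,
    fun p => u p.1 ^ σ * k p ^ (1 / θ), fun p => u p.2 ^ σ * k p ^ (1 / θ)] with hf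
  set e : Fin 3 → ℝ := ![1 - θ, θ / 2, θ / 2] with he
  have holder := ENNReal.lintegral_prod_norm_pow_le (μ := μ.prod μ) Finset.univ (f := f)
    (by intro i _
        fin_cases i <;> simp only [hf] <;> refine Measurable.aemeasurable ?_ <;>
          simp <;> fun_prop) (p := e) (by simp [he, Fin.sum_univ_three]; ring) (by
        intro i _
        fin_cases i <;> simp [he] <;> linarith)
  simp only [Fin.prod_univ_three, hf, he, Matrix.cons_val_zero, Matrix.cons_val_one,
    Matrix.cons_val_two, Matrix.head_cons, Matrix.tail_cons] at holder
  have i0 : ∫⁻ p, u p.1 ^ σ * u p.2 ^ σ ∂(μ.prod μ) = M * M :=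
    lintegral_prod_mul (f := fun z => u z ^ σ) (g := fun z => u z ^ σ) (by fun_prop) (by fun_prop)
  have i1 : ∫⁻ p, u p.1 ^ σ * k p ^ (1 / θ) ∂(μ.prod μ) ≤ M * K := by
    rw [lintegral_prod _ (by fun_prop)]
    calc _ = ∫⁻ z, u z ^ σ * ∫⁻ w, k (z, w) ^ (1 / θ) ∂μ ∂μ := by
          congr 1; ext z; dsimp only; rw [lintegral_const_mul _ (by fun_prop)]
      _ ≤ ∫⁻ z, u z ^ σ * K ∂μ := by
          apply lintegral_mono_ae
          filter_upwards [h1] with z hz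
          gcongr
      _ = _ := by rw [lintegral_mul_const _ (by fun_prop)]
  have i2 : ∫⁻ p, u p.2 ^ σ * k p ^ (1 / θ) ∂(μ.prod μ) ≤ M * K := by
    rw [lintegral_prod_symm _ (by fun_prop)]
    calc _ = ∫⁻ z, u z ^ σ * ∫⁻ w, k (w, z) ^ (1 / θ) ∂μ ∂μ := by
          congr 1; ext z; dsimp only; rw [lintegral_const_mul _ (by fun_prop)]
      _ ≤ ∫⁻ z, u z ^ σ * K ∂μ := by
          apply lintegral_mono_ae
          filter_upwards [h2] with z hz
          gcongr
      _ = _ := by rw [lintegral_mul_const _ (by fun_prop)]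
  have e1 : σ * (1 - θ) + σ * (θ / 2) = 1 := by linarith
  have e2 : 1 / θ * (θ / 2) + 1 / θ * (θ / 2) = 1 := by field_simp; norm_num
  have hu' : ∀ a : ℝ≥0∞, (a ^ σ) ^ (1 - θ) * (a ^ σ) ^ (θ / 2) = a := by
    intro a
    rw [← ENNReal.rpow_mul, ← ENNReal.rpow_mul, ← ENNReal.rpow_add_of_nonneg _ _
      (mul_nonneg hσ0.le (by linarith)) (by positivity), e1, ENNReal.rpow_one]
  have hk' : ∀ a : ℝ≥0∞, (a ^ (1 / θ)) ^ (θ / 2) * (a ^ (1 / θ)) ^ (θ / 2) = a := by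
    intro a
    rw [← ENNReal.rpow_mul, ← ENNReal.rpow_add_of_nonneg _ _
      (by positivity) (by positivity), e2, ENNReal.rpow_one]
  calc _ = ∫⁻ p, (u p.1 ^ σ * u p.2 ^ σ) ^ (1 - θ) * (u p.1 ^ σ * k p ^ (1 / θ)) ^ (θ / 2) *
        (u p.2 ^ σ * k p ^ (1 / θ)) ^ (θ / 2) ∂(μ.prod μ) := by
        congr 1; ext p
        conv_lhs => rw [← hu' (u p.1), ← hu' (u p.2), ← hk' (k p)]
        rw [ENNReal.mul_rpow_of_nonneg _ _ (by linarith : 0 ≤ 1 - θ),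
          ENNReal.mul_rpow_of_nonneg _ _ (by linarith : 0 ≤ θ / 2),
          ENNReal.mul_rpow_of_nonneg _ _ (by linarith : 0 ≤ θ / 2)]
        ring
    _ ≤ _ := holder
    _ ≤ (M * M) ^ (1 - θ) * (M * K) ^ (θ / 2) * (M * K) ^ (θ / 2) := by
        rw [i0]
        gcongr
    _ = _ := by
        have : ∀ a : ℝ≥0∞, a ^ (θ / 2) * a ^ (θ / 2) = a ^ θ := by
          intro a
          rw [← ENNReal.rpow_add_of_nonneg _ _ (by positivity) (by positivity)]
          congr 1; ring
        rw [mul_assoc, this, ENNReal.mul_rpow_of_nonneg _ _ (by linarith : 0 ≤ 1 - θ),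
          ENNReal.mul_rpow_of_nonneg _ _ hθ.le,
          ← ENNReal.rpow_add_of_nonneg _ _ (by linarith) (by linarith), ← mul_assoc,
          ← ENNReal.rpow_add_of_nonneg _ _ (by linarith) (by linarith), mul_comm]
        congr 2; ring

lemma ker_one (β : ℝ) (hβ1 : β < 1) (z : ℝ) (hz : z ∈ Set.Icc (0:ℝ) 1) :
    ∫⁻ w in Set.Icc (0:ℝ) 1, ENNReal.ofReal |w - z| ^ (-β) ≤ ENNReal.ofReal (2 / (1 - β)) := by
  set φ : ℝ → ℝ≥0∞ := (Set.Ioc (0:ℝ) 1).indicator (fun v => ENNReal.ofReal (v ^ (-β))) with hφ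
  have hφm : Measurable φ := Measurable.indicator (by fun_prop) measurableSet_Ioc
  have hφi : ∫⁻ v, φ v = ENNReal.ofReal (1 / (1 - β)) := by
    rw [hφ, lintegral_indicator measurableSet_Ioc, lint_rpow _ _ (by linarith) (by norm_num)]
    rw [Real.one_rpow]; congr 2; ring
  calc _ = ∫⁻ w, (Set.Icc (0:ℝ) 1).indicator (fun w => ENNReal.ofReal |w - z| ^ (-β)) w := by
        rw [lintegral_indicator measurableSet_Icc]
    _ ≤ ∫⁻ w, (φ (w - z) + φ (z - w)) := by
        apply lintegral_mono_ae
        have : ∀ᵐ w : ℝ, w ≠ z := by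
          rw [ae_iff]; simp
        filter_upwards [this] with w hw
        by_cases hwI : w ∈ Set.Icc (0:ℝ) 1
        · rw [Set.indicator_of_mem hwI]
          rcases lt_or_gt_of_ne hw with h | h
          · have m : z - w ∈ Set.Ioc (0:ℝ) 1 := ⟨by linarith, by linarith [hz.2, hwI.1]⟩
            refine le_trans (le_of_eq ?_) le_add_self
            rw [hφ, Set.indicator_of_mem m, abs_sub_comm, abs_of_pos m.1,
              ENNReal.ofReal_rpow_of_pos m.1]
          · have m : w - z ∈ Set.Ioc (0:ℝ) 1 := ⟨by linarith, by linarith [hz.1, hwI.2]⟩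
            refine le_trans (le_of_eq ?_) le_self_add
            rw [hφ, Set.indicator_of_mem m, abs_of_pos m.1, ENNReal.ofReal_rpow_of_pos m.1]
        · rw [Set.indicator_of_notMem hwI]; exact bot_le
    _ = _ := by
        rw [lintegral_add_left (by fun_prop), lintegral_sub_right_eq_self φ z,
          lintegral_sub_left_eq_self φ z, hφi, ← ENNReal.ofReal_add]
        · congr 1; ring
        · have : 0 < 1 - β := by linarith
          positivity
        · have : 0 < 1 - β := by linarith
          positivity

lemma ker_two (β : ℝ) (hβ1 : β < 1) (z : Fin 2 → ℝ) (hz : z ∈ Set.Icc (0 : Fin 2 → ℝ) 1) :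
    ∫⁻ w in Set.Icc (0 : Fin 2 → ℝ) 1,
      (ENNReal.ofReal |w 0 - z 0| * ENNReal.ofReal |w 1 - z 1|) ^ (-β) ≤
      ENNReal.ofReal (2 / (1 - β)) ^ 2 := by
  have hp := volume_preserving_finTwoArrow ℝ
  have hpre : Set.Icc (0 : Fin 2 → ℝ) 1 =
      MeasurableEquiv.finTwoArrow ⁻¹' ((Set.Icc (0:ℝ) 1) ×ˢ (Set.Icc (0:ℝ) 1)) := by
    ext w
    simp [MeasurableEquiv.finTwoArrow, Pi.le_def, Fin.forall_fin_two]
  have := hp.setLIntegral_comp_preimage (s := (Set.Icc (0:ℝ) 1) ×ˢ (Set.Icc (0:ℝ) 1))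
    (f := fun p : ℝ × ℝ => (ENNReal.ofReal |p.1 - z 0| * ENNReal.ofReal |p.2 - z 1|) ^ (-β))
    (measurableSet_Icc.prod measurableSet_Icc) (by fun_prop)
  rw [← hpre] at this
  refine (le_of_eq this).trans ?_
  simp only [ENNReal.mul_rpow_of_ne_top ENNReal.ofReal_ne_top ENNReal.ofReal_ne_top]
  rw [Measure.volume_eq_prod, ← Measure.prod_restrict,
    lintegral_prod_mul (f := fun a => ENNReal.ofReal |a - z 0| ^ (-β))
      (g := fun a => ENNReal.ofReal |a - z 1| ^ (-β)) (by fun_prop) (by fun_prop), pow_two]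
  gcongr
  · exact ker_one β hβ1 _ ⟨hz.1 0, hz.2 0⟩
  · exact ker_one β hβ1 _ ⟨hz.1 1, hz.2 1⟩

/-- Glue two planar vectors. -/
def glue (p : (Fin 2 → ℝ) × (Fin 2 → ℝ)) : Fin 4 → ℝ := ![p.1 0, p.1 1, p.2 0, p.2 1]

/-- Glueing as a measurable equivalence. -/
def glueE : (Fin 2 → ℝ) × (Fin 2 → ℝ) ≃ᵐ (Fin 4 → ℝ) :=
  (MeasurableEquiv.sumPiEquivProdPi (fun _ : Fin 2 ⊕ Fin 2 => ℝ)).symm.trans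
    (MeasurableEquiv.piCongrLeft (fun _ : Fin 4 => ℝ) (finSumFinEquiv (m := 2) (n := 2)))

lemma glueE_eq : ⇑glueE = glue := by
  funext p
  ext i
  have : ∀ j : Fin 2 ⊕ Fin 2, glueE p (finSumFinEquiv (m := 2) (n := 2) j) =
      Sum.elim p.1 p.2 j := by
    intro j
    refine (Equiv.piCongrLeft_apply_apply (fun _ : Fin 4 => ℝ)
      (finSumFinEquiv (m := 2) (n := 2)) _ j).trans ?_
    cases j <;> rfl
  fin_cases i
  · exact this (Sum.inl 0)
  · exact this (Sum.inl 1)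
  · exact this (Sum.inr 0)
  · exact this (Sum.inr 1)

lemma glue_mp : MeasurePreserving glue (volume.prod volume) volume := by
  rw [← glueE_eq]
  exact (volume_measurePreserving_sumPiEquivProdPi_symm (fun _ : Fin 2 ⊕ Fin 2 => ℝ)).trans
    (volume_measurePreserving_piCongrLeft (fun _ : Fin 4 => ℝ) (finSumFinEquiv (m := 2) (n := 2)))

lemma glue_emb : MeasurableEmbedding glue := by
  rw [← glueE_eq]; exact glueE.measurableEmbedding

lemma kernel_est (r θ σ : ℝ) (hr : 1 < r) (hθ : r - 1 < θ) (hθ1 : θ < 1)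
    (hσ : σ * (1 - θ / 2) = 1) (f : (Fin 2 → ℝ) → ℂ) (hf : Measurable f)
    (hs : Function.support f ⊆ Set.Icc 0 1) :
    ∫⁻ y in HS, ENNReal.ofReal (Jac y) ^ (1 - r) *
        ‖f ![y 0, y 1] * f ![y 2, y 3]‖ₑ ^ r ≤
      (ENNReal.ofReal (2 / (1 - (r - 1) / θ)) ^ 2) ^ θ *
        (∫⁻ z, ‖f z‖ₑ ^ (r * σ)) ^ (2 - θ) := by
  have hθ0 : 0 < θ := by linarith
  have hβ : (r - 1) / θ < 1 := by rw [div_lt_one hθ0]; exact hθ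
  set I := Set.Icc (0 : Fin 2 → ℝ) 1 with hI
  have hIm : MeasurableSet I := measurableSet_Icc
  set k : (Fin 2 → ℝ) × (Fin 2 → ℝ) → ℝ≥0∞ := fun p =>
    (ENNReal.ofReal |p.2 0 - p.1 0| * ENNReal.ofReal |p.2 1 - p.1 1|) ^ (1 - r) with hk
  have hkm : Measurable k := by fun_prop
  have hkp : ∀ z w, k (z, w) ^ (1 / θ) =
      (ENNReal.ofReal |w 0 - z 0| * ENNReal.ofReal |w 1 - z 1|) ^ (-((r - 1) / θ)) := by
    intro z w
    simp only [hk]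
    rw [← ENNReal.rpow_mul]
    congr 1; ring
  have hy := young_aux (volume.restrict I) (fun z => ‖f z‖ₑ ^ r) (by fun_prop) k hkm
    (ENNReal.ofReal (2 / (1 - (r - 1) / θ)) ^ 2) θ σ hθ0 hθ1 hσ
    (by filter_upwards [ae_restrict_mem hIm] with z hz
        simp only [hkp]
        exact ker_two _ hβ z hz)
    (by filter_upwards [ae_restrict_mem hIm] with z hz
        simp only [hkp]
        simp only [fun w : Fin 2 → ℝ => abs_sub_comm (z 0) (w 0),
          fun w : Fin 2 → ℝ => abs_sub_comm (z 1) (w 1)]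
        exact ker_two _ hβ z hz)
  simp only [← ENNReal.rpow_mul] at hy
  have hr0 : 0 < r := by linarith
  refine le_trans ?_ (hy.trans ?_)
  · calc _ ≤ ∫⁻ y, ENNReal.ofReal (Jac y) ^ (1 - r) *
          ‖f ![y 0, y 1] * f ![y 2, y 3]‖ₑ ^ r := setLIntegral_le_lintegral _ _
      _ = ∫⁻ p, ENNReal.ofReal (Jac (glue p)) ^ (1 - r) *
          ‖f ![glue p 0, glue p 1] * f ![glue p 2, glue p 3]‖ₑ ^ r ∂(volume.prod volume) := by
          exact (glue_mp.lintegral_comp_emb glue_emb (fun y => ENNReal.ofReal (Jac y) ^ (1 - r) *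
            ‖f ![y 0, y 1] * f ![y 2, y 3]‖ₑ ^ r)).symm
      _ ≤ ∫⁻ p, (I ×ˢ I).indicator (fun p => ‖f p.1‖ₑ ^ r * ‖f p.2‖ₑ ^ r * k p) p
            ∂(volume.prod volume) := by
          apply lintegral_mono
          intro p
          have g1 : ![glue p 0, glue p 1] = p.1 := by ext i; fin_cases i <;> simp [glue]
          have g2 : ![glue p 2, glue p 3] = p.2 := by ext i; fin_cases i <;> simp [glue]
          dsimp only
          rw [g1, g2]
          by_cases hp : p ∈ I ×ˢ I
          · rw [Set.indicator_of_mem hp, enorm_mul, ENNReal.mul_rpow_of_nonneg _ _ hr0.le, mul_comm]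
            gcongr
            simp only [hk]
            rw [show 1 - r = -(r - 1) by ring, ENNReal.rpow_neg, ENNReal.rpow_neg, ENNReal.inv_le_inv]
            apply ENNReal.rpow_le_rpow _ (by linarith)
            rw [← ENNReal.ofReal_mul (abs_nonneg _)]
            apply ENNReal.ofReal_le_ofReal
            simp only [Jac, glue]
            simp
            nlinarith [sq_abs (p.2 0 - p.1 0), sq_abs (p.2 1 - p.1 1),
              sq_nonneg (|p.2 0 - p.1 0| - |p.2 1 - p.1 1|), sq_nonneg (p.2 0 - p.1 0),
              sq_nonneg (p.2 1 - p.1 1)]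
          · have : f p.1 * f p.2 = 0 := by
              by_contra hne
              apply hp
              exact ⟨hs (left_ne_zero_of_mul hne), hs (right_ne_zero_of_mul hne)⟩
            simp [this, hr0]
      _ = _ := by
          rw [lintegral_indicator (hIm.prod hIm), ← Measure.prod_restrict]
  · refine mul_le_mul_right (ENNReal.rpow_le_rpow ?_ (by linarith)) _
    exact setLIntegral_le_lintegral _ _

lemma diag_null : volume {y : Fin 4 → ℝ | y 0 = y 2} = 0 := by
  set L : (Fin 4 → ℝ) →ₗ[ℝ] ℝ := (LinearMap.proj (R := ℝ) (φ := fun _ : Fin 4 => ℝ) 0) -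
    LinearMap.proj (R := ℝ) (φ := fun _ : Fin 4 => ℝ) 2 with hL
  have : {y : Fin 4 → ℝ | y 0 = y 2} = (LinearMap.ker L : Set (Fin 4 → ℝ)) := by
    ext y; simp [hL, sub_eq_zero]
  rw [this]
  apply Measure.addHaar_submodule
  intro h
  have h1 : (Pi.single 0 1 : Fin 4 → ℝ) ∈ LinearMap.ker L := by rw [h]; trivial
  simp [hL] at h1

lemma sym_int (H : (Fin 4 → ℝ) → ℂ) (hH : Integrable H)
    (hsym : ∀ p, H (glue (Prod.swap p)) = H (glue p)) :
    ∫ y, H y = 2 * ∫ y in HS, H y := by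
  rw [← integral_add_compl HS_meas hH, two_mul]
  congr 1
  set HS' : Set (Fin 4 → ℝ) := {y | y 2 < y 0} with hHS'
  have hm : MeasurableSet HS' := measurableSet_lt (measurable_pi_apply 2) (measurable_pi_apply 0)
  have hae : (HSᶜ : Set (Fin 4 → ℝ)) =ᵐ[volume] HS' := by
    have : ∀ᵐ y : Fin 4 → ℝ, ¬ (y 0 = y 2) := by
      rw [ae_iff]; simpa using diag_null
    filter_upwards [this] with y hy
    apply propext
    change ¬ (y 0 < y 2) ↔ y 2 < y 0
    constructor
    · intro h
      exact lt_of_le_of_ne (not_lt.1 h) (fun h => hy h.symm)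
    · intro h; exact not_lt.2 h.le
  rw [setIntegral_congr_set hae, ← glue_mp.setIntegral_preimage_emb glue_emb,
    ← glue_mp.setIntegral_preimage_emb glue_emb]
  have hsw : MeasurePreserving (Prod.swap : (Fin 2 → ℝ) × (Fin 2 → ℝ) → _)
    (volume.prod volume) (volume.prod volume) := Measure.measurePreserving_swap
  rw [← hsw.setIntegral_preimage_emb MeasurableEquiv.prodComm.measurableEmbedding
    _ (glue ⁻¹' HS)]
  simp only [hsym]
  congr 1

/-- The quadratic forms of the statement. -/
def QQ (ξ : Fin 2 → ℝ) (j : Fin 2) : ℝ := if j = 0 then ξ 0 * ξ 1 else ξ 0 ^ 2 - ξ 1 ^ 2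

lemma QQ_cont : Continuous QQ := by
  refine continuous_pi fun j => ?_
  fin_cases j <;> simp [QQ] <;> fun_prop

/-- The phase function. -/
noncomputable def phs (x : Fin 4 → ℝ) (ξ : Fin 2 → ℝ) : ℂ :=
  Complex.exp (2 * (Real.pi : ℂ) * Complex.I *
      ((((∑ i : Fin 2, x (Fin.castAdd 2 i) * ξ i) +
        ∑ j : Fin 2, x (Fin.natAdd 2 j) * QQ ξ j : ℝ)) : ℂ))

lemma phs_norm (x ξ) : ‖phs x ξ‖ = 1 := by
  unfold phs
  rw [← mul_right_comm, ← Complex.ofReal_ofNat, ← Complex.ofReal_mul, ← Complex.ofReal_mul]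
  exact Complex.norm_exp_ofReal_mul_I _

lemma phs_cont : Continuous (fun p : (Fin 4 → ℝ) × (Fin 2 → ℝ) => phs p.1 p.2) := by
  have := QQ_cont
  unfold phs
  fun_prop

lemma ext_eq (f : (Fin 2 → ℝ) → ℂ) (hs : Function.support f ⊆ Set.Icc 0 1) (x : Fin 4 → ℝ) :
    extOp 2 2 QQ f x = ∫ ξ, phs x ξ * f ξ := by
  rw [← setIntegral_eq_integral_of_forall_compl_eq_zero (s := Set.Icc (0 : Fin 2 → ℝ) 1)]
  · rfl
  · intro ξ hξ
    have : f ξ = 0 := by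
      by_contra h
      exact hξ (hs h)
    simp [this]

lemma ext_sq (f : (Fin 2 → ℝ) → ℂ) (hi : Integrable f)
    (hs : Function.support f ⊆ Set.Icc 0 1) (x : Fin 4 → ℝ) :
    extOp 2 2 QQ f x ^ 2 = 2 * ∫ y in HS, Complex.exp (2 * (Real.pi : ℂ) * Complex.I *
        ((∑ i, x i * Phi y i : ℝ) : ℂ)) * (f ![y 0, y 1] * f ![y 2, y 3]) := by
  set H : (Fin 4 → ℝ) → ℂ := fun y => Complex.exp (2 * (Real.pi : ℂ) * Complex.I *
        ((∑ i, x i * Phi y i : ℝ) : ℂ)) * (f ![y 0, y 1] * f ![y 2, y 3]) with hH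
  have hhi : Integrable (fun ξ => phs x ξ * f ξ) := by
    refine hi.bdd_mul (c := 1) ?_ (Filter.Eventually.of_forall fun ξ => (phs_norm x ξ).le)
    have := phs_cont
    exact (by fun_prop : Continuous (phs x)).aestronglyMeasurable
  have hglue : ∀ p, H (glue p) = (phs x p.1 * f p.1) * (phs x p.2 * f p.2) := by
    intro p
    have g1 : ![glue p 0, glue p 1] = p.1 := by ext i; fin_cases i <;> simp [glue]
    have g2 : ![glue p 2, glue p 3] = p.2 := by ext i; fin_cases i <;> simp [glue]
    simp only [hH]
    rw [g1, g2]
    have : Complex.exp (2 * (Real.pi : ℂ) * Complex.I *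
        ((∑ i, x i * Phi (glue p) i : ℝ) : ℂ)) = phs x p.1 * phs x p.2 := by
      unfold phs
      rw [← Complex.exp_add, ← mul_add, ← Complex.ofReal_add]
      congr 3
      simp [Fin.sum_univ_four, Fin.sum_univ_two, Phi, glue, QQ]
      ring
    rw [this]; ring
  have hHi : Integrable H := by
    rw [← glue_mp.integrable_comp_emb glue_emb]
    refine (hhi.mul_prod hhi).congr (Filter.Eventually.of_forall fun p => ?_)
    simp [hglue p]
  rw [← sym_int H hHi, ext_eq f hs, pow_two, ← integral_prod_mul,
    ← glue_mp.integral_comp glue_emb]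
  · congr 1; ext p; rw [hglue]
  · intro p
    rw [hglue, hglue]
    simp [mul_comm]

lemma norm_mono (f : (Fin 2 → ℝ) → ℂ) (hf : Measurable f)
    (hs : Function.support f ⊆ Set.Icc 0 1) {a p : ℝ≥0∞} (h : a ≤ p) :
    eLpNorm f a volume ≤ eLpNorm f p volume := by
  rw [← eLpNorm_restrict_eq_of_support_subset (p := a) hs,
    ← eLpNorm_restrict_eq_of_support_subset (p := p) hs]
  have hv : volume (Set.Icc (0 : Fin 2 → ℝ) 1) = 1 := by
    rw [Real.volume_Icc_pi]; simp
  have : IsProbabilityMeasure (volume.restrict (Set.Icc (0 : Fin 2 → ℝ) 1)) :=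
    ⟨by rw [Measure.restrict_apply_univ, hv]⟩
  exact eLpNorm_le_eLpNorm_of_exponent_le h hf.aestronglyMeasurable

lemma ext_top (f : (Fin 2 → ℝ) → ℂ) (hs : Function.support f ⊆ Set.Icc 0 1) :
    eLpNorm (extOp 2 2 QQ f) ⊤ volume ≤ eLpNorm f 1 volume := by
  rw [eLpNorm_exponent_top, eLpNorm_one_eq_lintegral_enorm]
  refine essSup_le_of_ae_le _ (Filter.Eventually.of_forall fun x => ?_)
  change ‖extOp 2 2 QQ f x‖ₑ ≤ _
  rw [ext_eq f hs x]
  refine (enorm_integral_le_lintegral_enorm _).trans (lintegral_mono fun ξ => ?_)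
  rw [enorm_mul]
  have : ‖phs x ξ‖ₑ = 1 := by rw [← ofReal_norm, phs_norm]; simp
  rw [this, one_mul]

lemma main_fin (Q θ : ℝ) (hQ : 2 < Q) (hθ : Q / (Q - 1) - 1 < θ) (hθ1 : θ < 1) :
    ∃ C : ℝ≥0∞, C < ⊤ ∧ C ≠ 0 ∧
      ∀ f : (Fin 2 → ℝ) → ℂ, Measurable f → Integrable f →
        Function.support f ⊆ Set.Icc 0 1 →
        eLpNorm (extOp 2 2 QQ f) (ENNReal.ofReal (2 * Q)) volume ≤
          C * eLpNorm f (ENNReal.ofReal (Q / (Q - 1) * (1 - θ / 2)⁻¹)) volume := by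
  obtain ⟨C, hC, hC0, hcov⟩ := cov_est Q hQ
  set r := Q / (Q - 1) with hr
  have hr1 : 1 < r := by rw [hr, lt_div_iff₀ (by linarith)]; linarith
  have hrQ : r * (Q - 1) = Q := by rw [hr]; field_simp [show Q - 1 ≠ 0 by linarith]
  set σ := (1 - θ / 2)⁻¹ with hσ
  have hσ1 : σ * (1 - θ / 2) = 1 := inv_mul_cancel₀ (by linarith)
  have hσ0 : 0 < σ := by rw [hσ]; apply inv_pos.2; linarith
  have hθ0 : 0 < θ := by linarith
  set K : ℝ≥0∞ := (ENNReal.ofReal (2 / (1 - (r - 1) / θ)) ^ 2) ^ θ with hK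
  have hK1 : 0 < 2 / (1 - (r - 1) / θ) := by
    apply div_pos two_pos
    rw [sub_pos, div_lt_one hθ0]; exact hθ
  have hKt : K ≠ ⊤ := by
    rw [hK]
    exact ENNReal.rpow_ne_top_of_nonneg hθ0.le (by simp)
  have hK0 : K ≠ 0 := by
    rw [hK]
    have h1 : ENNReal.ofReal (2 / (1 - (r - 1) / θ)) ≠ 0 := by simpa using hK1
    intro h
    rw [ENNReal.rpow_eq_zero_iff_of_pos hθ0] at h
    exact h1 (by simpa using h)
  have hQ1 : 0 < Q - 1 := by linarith
  have h2Q : (0:ℝ) < 1 / (2 * Q) := by positivity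
  set A : ℝ≥0∞ := 2 ^ Q * (C * K ^ (Q - 1)) with hA
  have hAt : A ≠ ⊤ := by
    rw [hA]
    refine ENNReal.mul_ne_top (ENNReal.rpow_ne_top_of_nonneg (by linarith) (by simp))
      (ENNReal.mul_ne_top hC.ne (ENNReal.rpow_ne_top_of_nonneg hQ1.le hKt))
  have hA0 : A ≠ 0 := by
    rw [hA]
    refine mul_ne_zero ?_ (mul_ne_zero hC0 ?_)
    · intro h; rw [ENNReal.rpow_eq_zero_iff_of_pos (by linarith)] at h; simp at h
    · intro h; rw [ENNReal.rpow_eq_zero_iff_of_pos hQ1] at h; exact hK0 h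
  refine ⟨A ^ (1 / (2 * Q)), lt_top_iff_ne_top.2 (ENNReal.rpow_ne_top_of_nonneg h2Q.le hAt), ?_, ?_⟩
  · intro h; rw [ENNReal.rpow_eq_zero_iff_of_pos h2Q] at h; exact hA0 h
  intro f hf hi hs
  have hp0 : 0 < r * σ := by positivity
  rw [eLpNorm_eq_lintegral_rpow_enorm_toReal (by simp; linarith) ENNReal.ofReal_ne_top,
    eLpNorm_eq_lintegral_rpow_enorm_toReal (by simpa using hp0) (by simp),
    ENNReal.toReal_ofReal (by linarith), ENNReal.toReal_ofReal hp0.le]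
  set M := ∫⁻ z, ‖f z‖ₑ ^ (r * σ) with hM
  have hF : Measurable (fun y : Fin 4 → ℝ => f ![y 0, y 1] * f ![y 2, y 3]) := by
    have h1 : Measurable (fun y : Fin 4 → ℝ => (![y 0, y 1] : Fin 2 → ℝ)) := by
      refine measurable_pi_lambda _ fun i => ?_
      fin_cases i <;> simp <;> fun_prop
    have h2 : Measurable (fun y : Fin 4 → ℝ => (![y 2, y 3] : Fin 2 → ℝ)) := by
      refine measurable_pi_lambda _ fun i => ?_
      fin_cases i <;> simp <;> fun_prop
    exact (hf.comp h1).mul (hf.comp h2)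
  have hFi : Integrable (fun y : Fin 4 → ℝ => f ![y 0, y 1] * f ![y 2, y 3]) := by
    rw [← glue_mp.integrable_comp_emb glue_emb]
    refine (hi.mul_prod hi).congr (Filter.Eventually.of_forall fun p => ?_)
    have g1 : ![glue p 0, glue p 1] = p.1 := by ext i; fin_cases i <;> simp [glue]
    have g2 : ![glue p 2, glue p 3] = p.2 := by ext i; fin_cases i <;> simp [glue]
    simp only [Function.comp_apply]
    rw [g1, g2]
  have key : ∫⁻ x : Fin 4 → ℝ, ‖extOp 2 2 QQ f x‖ₑ ^ (2 * Q) ≤ A * M ^ ((2 - θ) * (Q - 1)) := by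
    have e1 : ∀ x : Fin 4 → ℝ, ‖extOp 2 2 QQ f x‖ₑ ^ (2 * Q) =
        2 ^ Q * ‖∫ y in HS, Complex.exp (2 * (Real.pi : ℂ) * Complex.I *
        ((∑ i, x i * Phi y i : ℝ) : ℂ)) * (f ![y 0, y 1] * f ![y 2, y 3])‖ₑ ^ Q := by
      intro x
      rw [ENNReal.rpow_mul, ← ENNReal.mul_rpow_of_nonneg _ _ (by linarith : (0:ℝ) ≤ Q)]
      congr 1
      have h2 : ‖(2 : ℂ)‖ₑ = 2 := by
        rw [← ofReal_norm]; simp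
      rw [ENNReal.rpow_two, ← enorm_pow, ext_sq f hi hs x, enorm_mul, h2]
    simp_rw [e1]
    rw [lintegral_const_mul' _ _ (ENNReal.rpow_ne_top_of_nonneg (by linarith) (by simp)), hA,
      mul_assoc (2 ^ Q : ℝ≥0∞)]
    gcongr
    rw [mul_assoc C]
    refine (hcov _ hF hFi).trans ?_
    gcongr
    have := kernel_est r θ σ hr1 hθ hθ1 hσ1 f hf hs
    rw [ENNReal.rpow_mul, ← ENNReal.mul_rpow_of_nonneg _ _ hQ1.le]
    gcongr
  refine (ENNReal.rpow_le_rpow key h2Q.le).trans ?_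
  rw [ENNReal.mul_rpow_of_nonneg _ _ h2Q.le, ← ENNReal.rpow_mul]
  have : (2 - θ) * (Q - 1) * (1 / (2 * Q)) = 1 / (r * σ) := by
    have h3 : σ * (2 - θ) = 2 := by linarith
    have hQ0 : Q ≠ 0 := by linarith
    rw [mul_one_div, div_eq_div_iff (by positivity) hp0.ne']
    calc (2 - θ) * (Q - 1) * (r * σ) = (σ * (2 - θ)) * (r * (Q - 1)) := by ring
      _ = _ := by rw [h3, hrQ]; ring
  rw [this]

theorem statement14 (p q : ℝ≥0∞) (hp : 1 ≤ p) (hq : 1 ≤ q)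
    (hq4 : 4 < q) (hpq : 1 / p + 3 / q < 1) :
    ∃ C : ℝ≥0∞, C < ⊤ ∧
      ∀ f : (Fin 2 → ℝ) → ℂ, Measurable f →
        Function.support f ⊆ Set.Icc 0 1 →
        eLpNorm (extOp 2 2
          (fun ξ j => if j = 0 then ξ 0 * ξ 1 else ξ 0 ^ 2 - ξ 1 ^ 2) f)
          q volume ≤
          C * eLpNorm f p volume := by
  by_cases hqt : q = ⊤
  · refine ⟨1, by simp, fun f hf hs => ?_⟩
    rw [hqt, one_mul]
    exact (ext_top f hs).trans (norm_mono f hf hs hp)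
  set Q := q.toReal / 2 with hQdef
  have hqQ : q = ENNReal.ofReal (2 * Q) := by
    rw [hQdef, mul_div_cancel₀ _ two_ne_zero, ENNReal.ofReal_toReal hqt]
  have hQ : 2 < Q := by
    have := (ENNReal.toReal_lt_toReal (by simp) hqt).2 hq4
    simp at this
    rw [hQdef]; linarith
  have hp0 : p ≠ 0 := (lt_of_lt_of_le one_pos hp).ne'
  set s := (1 / p).toReal with hsdef
  have hpt : 1 / p ≠ ⊤ := by simp [hp0]
  have hs0 : 0 ≤ s := ENNReal.toReal_nonneg
  have hreal : s + 3 / (2 * Q) < 1 := by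
    have hq0 : q ≠ 0 := (lt_of_lt_of_le one_pos hq).ne'
    have h3 : 3 / q ≠ ⊤ := ENNReal.div_ne_top (by simp) hq0
    have := (ENNReal.toReal_lt_toReal (ENNReal.add_ne_top.2 ⟨hpt, h3⟩) (by simp)).2 hpq
    rw [ENNReal.toReal_add hpt h3, ENNReal.toReal_div 3 q] at this
    simp only [ENNReal.toReal_one, ENNReal.toReal_ofNat] at this
    rw [hQdef, mul_div_cancel₀ _ two_ne_zero]
    exact this
  set r := Q / (Q - 1) with hr
  have hQ1 : 0 < Q - 1 := by linarith
  have hr1 : 1 < r := by rw [hr, lt_div_iff₀ hQ1]; linarith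
  have hr2 : r < 2 := by rw [hr, div_lt_iff₀ hQ1]; linarith
  have hkey : r - 1 < min 1 (2 - 2 * r * s) := by
    refine lt_min (by linarith) ?_
    have h1 : 3 / (2 * Q) = 3 * (r - 1) / (2 * r) := by
      rw [hr]; field_simp; ring
    rw [h1] at hreal
    have : s < 1 - 3 * (r - 1) / (2 * r) := by linarith
    have h2 : 2 * r * s < 2 * r * (1 - 3 * (r - 1) / (2 * r)) := by gcongr
    have h3 : 2 * r * (1 - 3 * (r - 1) / (2 * r)) = 3 - r := by field_simp; ring
    linarith
  obtain ⟨θ, hθ, hθ'⟩ := exists_between hkey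
  have hθ1 := hθ'.trans_le (min_le_left _ _)
  have hθ2 := hθ'.trans_le (min_le_right _ _)
  obtain ⟨C, hC, hC0, h⟩ := main_fin Q θ hQ hθ hθ1
  refine ⟨C, hC, fun f hf hs => ?_⟩
  by_cases hft : eLpNorm f p volume = ⊤
  · rw [hft, ENNReal.mul_top hC0]; exact le_top
  have hi : Integrable f := by
    rw [← memLp_one_iff_integrable]
    exact ⟨hf.aestronglyMeasurable, (norm_mono f hf hs hp).trans_lt (lt_top_iff_ne_top.2 hft)⟩
  have hle : ENNReal.ofReal (Q / (Q - 1) * (1 - θ / 2)⁻¹) ≤ p := by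
    by_cases hpT : p = ⊤
    · rw [hpT]; exact le_top
    apply ENNReal.ofReal_le_of_le_toReal
    have hpp : 0 < p.toReal := ENNReal.toReal_pos hp0 hpT
    have hse : s = 1 / p.toReal := by rw [hsdef, ENNReal.toReal_div]; simp
    rw [← div_eq_mul_inv, div_le_iff₀ (by linarith)]
    have h4 : s * p.toReal = 1 := by rw [hse]; field_simp
    change r ≤ _
    nlinarith
  rw [hqQ]
  exact (h f hf hi hs).trans (by gcongr; exact norm_mono f hf hs hle)
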